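/- arXiv:math/9712288 — 8 statements merged into one kernel-verified Lean document; each statement's English description precedes it below -/
import Mathlib

section
/- For all integers m ≥ 2 and n ≥ 2, the covering numbers of the Mycielski ideals satisfy cov(𝔐_m) = cov(𝔐_n). -/
open Cardinal

/-- The set of restrictions to `X` of members of `A`. -/
def restrictSet {k : ℕ} (A : Set (ℕ → Fin k)) (X : Set ℕ) : Set (↥X → Fin k) :=
  {g | ∃ f ∈ A, ∀ x : X, f ↑x = g x}

/-- The Mycielski ideal `𝔐ₖ`: all `A ⊆ k^ω` such that for every infinite `X ⊆ ω`
the set of restrictions of members of `A` to `X` is not all of `X → k`. -/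
def Mycielski (k : ℕ) : Set (Set (ℕ → Fin k)) :=
  {A | ∀ X : Set ℕ, X.Infinite → restrictSet A X ≠ Set.univ}

/-- The covering number of a family `I` of subsets of `α`: the least cardinality
of a subfamily of `I` whose union is all of `α`. -/
noncomputable def covNum {α : Type} (I : Set (Set α)) : Cardinal :=
  sInf {c : Cardinal | ∃ S : Set (Set α), S ⊆ I ∧ ⋃₀ S = Set.univ ∧ #S = c}

/-!
Let `m, n ≥ 2`. A map `Φ : n^ω → m^ω` that pulls sets in `𝔐_m` back to sets in `𝔐_n` also pulls
covers of `m^ω` back to covers of `n^ω`, whence `cov(𝔐_n) ≤ cov(𝔐_m)`.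

To build `Φ`, index the coordinates of `m^ω` by the tuples `t ∈ ω^m` instead of by `ω`, and let
`Φ(f)(t) = c(f ∘ t)` for a fixed surjection `c : n^m → m`. An infinite `X ⊆ ω` splits into
infinitely many disjoint tuples `t₀, t₁, …`. The values of `Φ(f)` at these tuples depend only on
`f ↾ X` and can be prescribed independently of each other, so if `Φ⁻¹(A)` restricts onto `n^X`, then
`A` restricts onto `m^{t₀, t₁, …}`.
-/

open Set Function

section CoveringNumber

variable {α β : Type} {I : Set (Set α)} {J : Set (Set β)}

lemma covNum_le_mk {S : Set (Set α)} (hSI : S ⊆ I) (hS : ⋃₀ S = Set.univ) : covNum I ≤ #S :=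
  csInf_le' ⟨S, hSI, hS, rfl⟩

lemma exists_mk_eq_covNum (hI : ⋃₀ I = Set.univ) : ∃ S ⊆ I, ⋃₀ S = Set.univ ∧ #S = covNum I :=
  csInf_mem (s := {c | ∃ S ⊆ I, ⋃₀ S = Set.univ ∧ #S = c}) ⟨#I, I, Subset.rfl, hI, rfl⟩

lemma covNum_le_of_preimage_mem (φ : α → β) (hφ : ∀ A ∈ J, φ ⁻¹' A ∈ I) (hJ : ⋃₀ J = Set.univ) :
    covNum I ≤ covNum J := by
  obtain ⟨S, hSJ, hS, hcard⟩ := exists_mk_eq_covNum hJ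
  have hcover : ⋃₀ (preimage φ '' S) = Set.univ := by
    rw [sUnion_image, ← preimage_sUnion, hS, preimage_univ]
  calc covNum I ≤ #(preimage φ '' S) :=
        covNum_le_mk (image_subset_iff.2 fun A hA => hφ A (hSJ hA)) hcover
    _ ≤ #S := mk_image_le
    _ = covNum J := hcard

end CoveringNumber

lemma singleton_mem_Mycielski {k : ℕ} [Nontrivial (Fin k)] (f : ℕ → Fin k) :
    {f} ∈ Mycielski k := by
  intro X hX hfull
  obtain ⟨x, hx⟩ := hX.nonempty
  obtain ⟨b, hb⟩ := exists_ne (f x)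
  obtain ⟨_, rfl, hf⟩ : (fun _ => b) ∈ restrictSet {f} X := hfull ▸ mem_univ _
  exact hb (hf ⟨x, hx⟩).symm

lemma sUnion_Mycielski (k : ℕ) [Nontrivial (Fin k)] : ⋃₀ Mycielski k = Set.univ :=
  eq_univ_of_forall fun f => ⟨{f}, singleton_mem_Mycielski f, rfl⟩

lemma exists_surjective_pi_of_nontrivial (α β : Type*) [Nonempty α] [Nontrivial β] :
    ∃ c : (α → β) → α, Surjective c := by
  classical
  obtain ⟨b₀, b₁, hb⟩ := exists_pair_ne β
  have hinj : Injective fun a : α => update (fun _ => b₀) a b₁ := by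
    intro a a' h
    by_contra hne
    have := congrFun h a
    simp only [update_self, update_of_ne hne] at this
    exact hb this.symm
  exact ⟨invFun _, invFun_surjective hinj⟩

/-- The map `Φ : α^ω → β^ω` with `Φ(f)(k) = c(f ∘ τₖ)`, where `τ` lists `ι`-tuples of natural
numbers and `c` decodes `ι`-tuples of elements of `α` into elements of `β`. It serves to compare
Mycielski ideals over alphabets of different sizes. -/
def tupleMap {ι α β : Type*} (τ : ℕ → ι → ℕ) (c : (ι → α) → β) (f : ℕ → α) : ℕ → β :=
  fun k => c (f ∘ τ k)

section TupleMap

variable {ι : Type*} [Finite ι] [Nonempty ι] {m n : ℕ} {τ : ℕ → ι → ℕ}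
  {c : (ι → Fin n) → Fin m} {A : Set (ℕ → Fin m)}

lemma exists_infinite_restrictSet_eq_univ_of_preimage_tupleMap (hτ : Surjective τ)
    (hc : Surjective c) {X : Set ℕ} (hX : X.Infinite)
    (hfull : restrictSet (tupleMap τ c ⁻¹' A) X = Set.univ) :
    ∃ Y : Set ℕ, Y.Infinite ∧ restrictSet A Y = Set.univ := by
  have := hX.to_subtype
  obtain ⟨e⟩ : Nonempty (ℕ × ι ≃ X) := nonempty_equiv_of_countable
  -- `s k` is an index of the `k`-th of the disjoint tuples into which `e` splits `X`.
  choose s hs using fun k => hτ fun i => (e (k, i) : ℕ)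
  have hs_inj : Injective s := by
    intro k l hkl
    obtain ⟨i⟩ := ‹Nonempty ι›
    have he : (e (k, i) : ℕ) = e (l, i) := by
      rw [← congrFun (hs k) i, hkl, congrFun (hs l) i]
    exact congrArg Prod.fst (e.injective (Subtype.ext he))
  refine ⟨range s, infinite_range_of_injective hs_inj, eq_univ_of_forall fun g => ?_⟩
  let code (k : ℕ) : ι → Fin n := surjInv hc (g ⟨s k, mem_range_self k⟩)
  obtain ⟨f, hfA, hf⟩ :
      (fun x => code (e.symm x).1 (e.symm x).2) ∈ restrictSet (tupleMap τ c ⁻¹' A) X :=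
    hfull ▸ mem_univ _
  refine ⟨tupleMap τ c f, hfA, ?_⟩
  rintro ⟨_, k, rfl⟩
  have hcode : f ∘ τ (s k) = code k := by
    funext i
    calc f (τ (s k) i) = f (e (k, i)) := by rw [hs]
      _ = code (e.symm (e (k, i))).1 (e.symm (e (k, i))).2 := hf _
      _ = code k i := by rw [e.symm_apply_apply]
  calc c (f ∘ τ (s k)) = c (code k) := congrArg c hcode
    _ = g ⟨s k, mem_range_self k⟩ := surjInv_eq hc _

lemma preimage_tupleMap_mem_Mycielski (hτ : Surjective τ) (hc : Surjective c)
    (hA : A ∈ Mycielski m) : tupleMap τ c ⁻¹' A ∈ Mycielski n := by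
  intro X hX hfull
  obtain ⟨Y, hY, hAY⟩ :=
    exists_infinite_restrictSet_eq_univ_of_preimage_tupleMap hτ hc hX hfull
  exact hA Y hY hAY

end TupleMap

lemma covNum_Mycielski_le (n m : ℕ) [Nontrivial (Fin n)] [Nontrivial (Fin m)] :
    covNum (Mycielski n) ≤ covNum (Mycielski m) := by
  obtain ⟨τ, hτ⟩ := exists_surjective_nat (Fin m → ℕ)
  obtain ⟨c, hc⟩ := exists_surjective_pi_of_nontrivial (Fin m) (Fin n)
  exact covNum_le_of_preimage_mem (tupleMap τ c)
    (fun _ => preimage_tupleMap_mem_Mycielski hτ hc) (sUnion_Mycielski m)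

/-- For all integers `m, n ≥ 2`, the covering numbers of the Mycielski ideals
satisfy `cov(𝔐_m) = cov(𝔐_n)`. -/
theorem covNum_Mycielski_eq (m n : ℕ) (hm : 2 ≤ m) (hn : 2 ≤ n) :
    covNum (Mycielski m) = covNum (Mycielski n) := by
  have := Fin.nontrivial_iff_two_le.2 hm
  have := Fin.nontrivial_iff_two_le.2 hn
  exact le_antisymm (covNum_Mycielski_le m n) (covNum_Mycielski_le n m)
end

section
/- Let k ≥ 2, let β : ω → [ω]² be a bijection from ω onto the two-element subsets of ω, and for n ∈ ω let β_s(n) and β_g(n) denote the smaller and the larger element of β(n). For a partial function f from ω to k and a partial function g from ω to k², write f ≡_β g if (1) β(n) ∩ β(m) = ∅ for all distinct n, m ∈ dom(g), and (2) g(n) = k·f(β_s(n)) + f(β_g(n)) for all n ∈ dom(g) (in particular β(n) ⊆ dom(f) for n ∈ dom(g)). Suppose A ⊆ (k²)^ω and Φ witnesses that A ∈ 𝔐_{k²}. Then the set A* = {f ∈ k^ω : for all infinite X ⊆ ω and all infinite Z ⊆ ω, f↾X is not ≡_β-related to Φ(Z)} belongs to the Mycielski ideal 𝔐_k. -/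
/-- `f↾X ≡_β g`, where `β(n) = {βs n, βg n}` is an enumeration of `[ω]²`,
`f : ℕ → k` is restricted to `X`, and `g` is a partial function from `ω` to `k²`
with domain `Z`:  (1) the pairs `β(n)` for `n ∈ dom g` are pairwise disjoint, and
(2) for every `n ∈ dom g`, `β(n) ⊆ X` and `g n = k·f(βs n) + f(βg n)`. -/
def equivBeta (k : ℕ) (βs βg : ℕ → ℕ) (X : Set ℕ) (f : ℕ → Fin k)
    (Z : Set ℕ) (g : ↥Z → Fin (k ^ 2)) : Prop :=
  (∀ n m : Z, n ≠ m → ({βs ↑n, βg ↑n} : Set ℕ) ∩ {βs ↑m, βg ↑m} = ∅) ∧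
  ∀ n : Z, βs ↑n ∈ X ∧ βg ↑n ∈ X ∧
    (g n : ℕ) = k * (f (βs ↑n) : ℕ) + (f (βg ↑n) : ℕ)

theorem pairwise_disjoint_pair_of_injective_sumElim {ι α : Type*} {a b : ι → α}
    (h : (Sum.elim a b).Injective) :
    Pairwise fun i j => Disjoint ({a i, b i} : Set α) {a j, b j} := by
  intro i j hij
  have hindex : Disjoint ({.inl i, .inr i} : Set (ι ⊕ ι)) {.inl j, .inr j} := by
    simp [hij.symm]
  simpa only [Set.image_pair, Sum.elim_inl, Sum.elim_inr] using (Set.disjoint_image_iff h).2 hindex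

/- Injectivity of `Sum.elim` encodes at once that each pair has two distinct entries and that
different pairs are disjoint. -/
theorem exists_infinite_injective_sumElim {ι : Type*} {βs βg : ι → ℕ}
    (hβ : ∀ a b, a < b → ∃ n, βs n = a ∧ βg n = b) {X : Set ℕ} (hX : X.Infinite) :
    ∃ Z : Set ι, Z.Infinite ∧ (Sum.elim (Z.domRestrict βs) (Z.domRestrict βg)).Injective ∧
      ∀ n ∈ Z, βs n ∈ X ∧ βg n ∈ X := by
  let e : ℕ → ℕ := Nat.nth (· ∈ X)
  have he : StrictMono e := Nat.nth_strictMono hX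
  have heX : ∀ i, e i ∈ X := Nat.nth_mem_of_infinite hX
  choose n hs hg using fun i => hβ (e (2 * i)) (e (2 * i + 1)) (he (Nat.lt_succ_self _))
  have hs_inj : (βs ∘ n).Injective := fun i j hij => by
    have := he.injective ((hs i).symm.trans (hij.trans (hs j)))
    omega
  have hg_inj : (βg ∘ n).Injective := fun i j hij => by
    have := he.injective ((hg i).symm.trans (hij.trans (hg j)))
    omega
  have hne : ∀ i j, βs (n i) ≠ βg (n j) := fun i j hij => by
    have := he.injective ((hs i).symm.trans (hij.trans (hg j)))
    omega
  refine ⟨Set.range n, Set.infinite_range_of_injective hs_inj.of_comp,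
    hs_inj.injOn_range.injective.sumElim hg_inj.injOn_range.injective ?_, ?_⟩
  · rintro ⟨_, i, rfl⟩ ⟨_, j, rfl⟩
    exact hne i j
  · rintro _ ⟨i, rfl⟩
    exact ⟨hs i ▸ heX _, hg i ▸ heX _⟩

theorem exists_fin_eq_mul_add {k : ℕ} (v : Fin (k ^ 2)) :
    ∃ s g : Fin k, (v : ℕ) = k * s + g := by
  let w : Fin (k * k) := v.cast (pow_two k)
  exact ⟨w.divNat, w.modNat, (Nat.div_add_mod (v : ℕ) k).symm⟩

theorem exists_equivBeta_of_injective {k : ℕ} [Nonempty (Fin k)] {βs βg : ℕ → ℕ} {X Z : Set ℕ}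
    (hinj : (Sum.elim (Z.domRestrict βs) (Z.domRestrict βg)).Injective)
    (hZX : ∀ n ∈ Z, βs n ∈ X ∧ βg n ∈ X) (g : Z → Fin (k ^ 2)) :
    ∃ f, equivBeta k βs βg X f Z g := by
  choose s t hst using fun n => exists_fin_eq_mul_add (g n)
  obtain ⟨f, hf⟩ := hinj.surjective_comp_right (Sum.elim s t)
  have hfs : ∀ n : Z, f (βs n) = s n := fun n => congrFun hf (.inl n)
  have hft : ∀ n : Z, f (βg n) = t n := fun n => congrFun hf (.inr n)
  refine ⟨f, fun n m hnm => ?_, fun n => ⟨(hZX n n.2).1, (hZX n n.2).2, ?_⟩⟩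
  · exact (pairwise_disjoint_pair_of_injective_sumElim hinj hnm).inter_eq
  · rw [hfs, hft, hst]

theorem equivBeta.congr {k : ℕ} {βs βg : ℕ → ℕ} {X Z : Set ℕ} {f f' : ℕ → Fin k}
    {g : Z → Fin (k ^ 2)} (h : equivBeta k βs βg X f Z g) (hff' : X.EqOn f f') :
    equivBeta k βs βg X f' Z g := by
  refine ⟨h.1, fun n => ?_⟩
  obtain ⟨hs, hg, hval⟩ := h.2 n
  exact ⟨hs, hg, by rwa [← hff' hs, ← hff' hg]⟩

theorem star_mem_Mycielski_general (k : ℕ) (βs βg : ℕ → ℕ)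
    (hβ : ∀ a b : ℕ, a < b → ∃ n, βs n = a ∧ βg n = b)
    (Φ : (Z : Set ℕ) → (↥Z → Fin (k ^ 2))) :
    {f : ℕ → Fin k | ∀ X Z : Set ℕ, X.Infinite → Z.Infinite →
        ¬ equivBeta k βs βg X f Z (Φ Z)} ∈ Mycielski k := by
  intro X hX huniv
  obtain ⟨Z, hZ, hinj, hZX⟩ := exists_infinite_injective_sumElim hβ hX
  obtain ⟨n, hn⟩ := hZ.nonempty
  have : Nonempty (Fin k) := (exists_fin_eq_mul_add (Φ Z ⟨n, hn⟩)).nonempty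
  obtain ⟨f, hf⟩ := exists_equivBeta_of_injective hinj hZX (Φ Z)
  obtain ⟨f', hf', hf'X⟩ : X.domRestrict f ∈ restrictSet _ X := huniv ▸ Set.mem_univ _
  exact hf' X Z hX hZ (hf.congr fun x hx => (hf'X ⟨x, hx⟩).symm)

/-- Let `β : ω → [ω]²` be a bijection, given by `n ↦ {βs n, βg n}` with
`βs n < βg n`.  If `Φ` witnesses that `A ∈ 𝔐_{k²}`, then
`A* = {f ∈ k^ω : for all infinite X, Z ⊆ ω, f↾X is not ≡_β-related to Φ Z}`
belongs to the Mycielski ideal `𝔐_k`. -/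
theorem star_mem_Mycielski (k : ℕ) (hk : 2 ≤ k) (βs βg : ℕ → ℕ)
    (hlt : ∀ n, βs n < βg n)
    (hbij : ∀ a b : ℕ, a < b → ∃! n, βs n = a ∧ βg n = b)
    (A : Set (ℕ → Fin (k ^ 2)))
    (Φ : (Z : Set ℕ) → (↥Z → Fin (k ^ 2)))
    (hΦ : ∀ Z : Set ℕ, Z.Infinite → ∀ h ∈ A, (fun z : Z => h ↑z) ≠ Φ Z) :
    {f : ℕ → Fin k | ∀ X Z : Set ℕ, X.Infinite → Z.Infinite →
        ¬ equivBeta k βs βg X f Z (Φ Z)} ∈ Mycielski k :=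
  star_mem_Mycielski_general k βs βg (fun a b hab => (hbij a b hab).exists) Φ
end

section
/- Let k ≥ 2, let β : ω → [ω]² be a bijection from ω onto the two-element subsets of ω, with β_s(n) and β_g(n) the smaller and larger element of β(n), and define ≡_β as follows: for a partial function f from ω to k and a partial function g from ω to k², f ≡_β g if β(n) ∩ β(m) = ∅ for all distinct n, m ∈ dom(g) and g(n) = k·f(β_s(n)) + f(β_g(n)) for all n ∈ dom(g). Suppose 𝒜 is a family of subsets of (k²)^ω whose union is all of (k²)^ω, and for each A ∈ 𝒜 the function Φ_A witnesses that A ∈ 𝔐_{k²}. For A ∈ 𝒜 set A* = {f ∈ k^ω : for all infinite X, Z ⊆ ω, f↾X is not ≡_β-related to Φ_A(Z)}. Then the union of {A* : A ∈ 𝒜} is all of k^ω. -/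
/-- The pair `(a, b)` of base-`k` digits, most significant first, read as an element of `k²`.
It turns the values of `f` on the two points of `β(n)` into the number `k·f(βs n) + f(βg n)`
of `equivBeta`. -/
def pairCode {k : ℕ} (a b : Fin k) : Fin (k ^ 2) :=
  Fin.cast (sq k).symm (finProdFinEquiv (a, b))

theorem val_pairCode {k : ℕ} (a b : Fin k) : (pairCode a b : ℕ) = k * a + b :=
  Nat.add_comm _ _

theorem pairCode_eq_of_equivBeta {k : ℕ} {βs βg : ℕ → ℕ} {X Z : Set ℕ} {f : ℕ → Fin k}
    {g : Z → Fin (k ^ 2)} (hfg : equivBeta k βs βg X f Z g) :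
    (fun n : Z => pairCode (f (βs n)) (f (βg n))) = g := by
  funext n
  obtain ⟨-, -, hgn⟩ := hfg.2 n
  exact Fin.ext ((val_pairCode _ _).trans hgn.symm)

theorem star_covers_general (k : ℕ) (βs βg : ℕ → ℕ) (𝒜 : Set (Set (ℕ → Fin (k ^ 2))))
    (hcov : ⋃₀ 𝒜 = Set.univ) (𝒵 : Set (Set ℕ))
    (Φ : Set (ℕ → Fin (k ^ 2)) → (Z : Set ℕ) → (↥Z → Fin (k ^ 2)))
    (hΦ : ∀ A ∈ 𝒜, ∀ Z ∈ 𝒵, ∀ h ∈ A, (fun z : Z => h ↑z) ≠ Φ A Z) :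
    (⋃ A ∈ 𝒜, {f : ℕ → Fin k | ∀ X, ∀ Z ∈ 𝒵, ¬ equivBeta k βs βg X f Z (Φ A Z)}) =
      Set.univ := by
  refine Set.eq_univ_of_forall fun f => ?_
  -- Any member of the cover that contains the total code of `f` along `β` works for `f`.
  obtain ⟨A, hA, hfA⟩ := Set.sUnion_eq_univ_iff.mp hcov
    fun n => pairCode (f (βs n)) (f (βg n))
  exact Set.mem_biUnion hA fun X Z hZ hfΦ =>
    hΦ A hA Z hZ _ hfA (pairCode_eq_of_equivBeta hfΦ)

/-- Let `β : ω → [ω]²` be a bijection, given by `n ↦ {βs n, βg n}` with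
`βs n < βg n`.  Suppose `𝒜` is a cover of `(k²)^ω` and for each `A ∈ 𝒜`,
`Φ A` witnesses that `A ∈ 𝔐_{k²}`.  Then the sets
`A* = {f ∈ k^ω : for all infinite X, Z ⊆ ω, f↾X is not ≡_β-related to Φ A Z}`
for `A ∈ 𝒜` cover `k^ω`. -/
theorem star_covers (k : ℕ) (hk : 2 ≤ k) (βs βg : ℕ → ℕ)
    (hlt : ∀ n, βs n < βg n)
    (hbij : ∀ a b : ℕ, a < b → ∃! n, βs n = a ∧ βg n = b)
    (𝒜 : Set (Set (ℕ → Fin (k ^ 2))))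
    (hcov : ⋃₀ 𝒜 = Set.univ)
    (Φ : Set (ℕ → Fin (k ^ 2)) → (Z : Set ℕ) → (↥Z → Fin (k ^ 2)))
    (hΦ : ∀ A ∈ 𝒜, ∀ Z : Set ℕ, Z.Infinite → ∀ h ∈ A, (fun z : Z => h ↑z) ≠ Φ A Z) :
    (⋃ A ∈ 𝒜, {f : ℕ → Fin k | ∀ X Z : Set ℕ, X.Infinite → Z.Infinite →
        ¬ equivBeta k βs βg X f Z (Φ A Z)}) = Set.univ := by
  refine Set.eq_univ_of_subset ?_ (star_covers_general k βs βg 𝒜 hcov {Z | Z.Infinite} Φ hΦ)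
  exact Set.iUnion₂_mono fun _ _ _ hf X Z _ hZ => hf X Z hZ
end

section
/- Let k ≥ 2 and suppose A ∈ 𝔐_k. Then for every infinite X ⊆ ω there is a function g : X → k such that for every f ∈ A the set {x ∈ X : f(x) ≠ g(x)} is infinite. -/
/-!
Split `X` into infinitely many disjoint infinite pieces, the fibers of a map to `ℕ`. On each piece
some function is not the restriction of any member of `A`; the union `g` of these functions differs
from every `f ∈ A` at some point of each piece, hence at infinitely many points of `X`.
-/

theorem restrictSet_eq_image_domRestrict {k : ℕ} (A : Set (ℕ → Fin k)) (X : Set ℕ) :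
    restrictSet A X = X.domRestrict '' A := by
  ext g
  simp only [restrictSet, Set.mem_ofPred_eq, Set.mem_image, funext_iff, Set.domRestrict_apply]

section Fibers

variable {ι : Type*} {X : Set ι}

theorem exists_infinite_fibers (hX : X.Infinite) :
    ∃ c : ι → ℕ, ∀ n, {x ∈ X | c x = n}.Infinite := by
  have : Nonempty ι := hX.nonempty.to_type
  let e : ℕ × ℕ ↪ ι := Nat.pairEquiv.toEmbedding.trans (hX.natEmbedding.trans (.subtype _))
  have he (p : ℕ × ℕ) : e p ∈ X := Subtype.coe_prop _
  refine ⟨fun x => (Function.invFun e x).1, fun n => ?_⟩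
  refine Set.infinite_of_injective_forall_mem (e.injective.comp (Prod.mk_right_injective n)) ?_
  exact fun m => ⟨he (n, m), congrArg Prod.fst (Function.leftInverse_invFun e.injective (n, m))⟩

theorem exists_forall_exists_ne_on_fibers {α : ι → Type*} {A : Set ((i : ι) → α i)} {κ : Type*}
    (c : ι → κ) (hA : ∀ j, {x ∈ X | c x = j}.domRestrict '' A ≠ Set.univ) :
    ∃ g : (x : X) → α x, ∀ f ∈ A, ∀ j, ∃ x : X, c x = j ∧ f x ≠ g x := by
  choose p hp using fun j => (Set.ne_univ_iff_exists_notMem _).1 (hA j)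
  refine ⟨fun x => p (c x) ⟨x, x.2, rfl⟩, fun f hf j => ?_⟩
  have hne : Set.domRestrict _ f ≠ p j := fun h => hp j ⟨f, hf, h⟩
  obtain ⟨⟨x, hxX, rfl⟩, hx⟩ := Function.ne_iff.1 hne
  exact ⟨⟨x, hxX⟩, rfl, hx⟩

theorem Mycielski_infinite_diff_general {α : ι → Type*} {A : Set ((i : ι) → α i)} (hX : X.Infinite)
    (hA : ∀ Y ⊆ X, Y.Infinite → Y.domRestrict '' A ≠ Set.univ) :
    ∃ g : (x : X) → α x, ∀ f ∈ A, {x : X | f x ≠ g x}.Infinite := by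
  obtain ⟨c, hc⟩ := exists_infinite_fibers hX
  obtain ⟨g, hg⟩ := exists_forall_exists_ne_on_fibers c fun n => hA _ (Set.sep_subset _ _) (hc n)
  refine ⟨g, fun f hf => ?_⟩
  have hsurj : Set.SurjOn (fun x : X => c x) {x | f x ≠ g x} Set.univ := fun n _ =>
    let ⟨x, hxn, hx⟩ := hg f hf n
    ⟨x, hx, hxn⟩
  exact (Set.infinite_univ.mono hsurj).of_image _

end Fibers

/-- If `A ∈ 𝔐_k` then for every infinite `X ⊆ ω` there is `g : X → k` such that
every `f ∈ A` differs from `g` at infinitely many points of `X`. -/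
theorem Mycielski_infinite_diff (k : ℕ) (hk : 2 ≤ k)
    (A : Set (ℕ → Fin k)) (hA : A ∈ Mycielski k) :
    ∀ X : Set ℕ, X.Infinite → ∃ g : ↥X → Fin k,
      ∀ f ∈ A, {x : ↥X | f ↑x ≠ g x}.Infinite := by
  intro X hX
  exact Mycielski_infinite_diff_general hX fun Y _ hY =>
    restrictSet_eq_image_domRestrict A Y ▸ hA Y hY
end

section
/- For every integer k ≥ 2, the Mycielski ideal is contained in the Rosłanowski ideal: 𝔐_k ⊆ ℜ_k. Consequently cov(ℜ_k) ≤ cov(𝔐_k). -/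
/-!
Let `A` be in the Mycielski ideal. Splitting an infinite set `X` into infinitely many infinite
pieces and picking on each piece a function that no member of `A` restricts to, one obtains a
function on `X` from which every member of `A` differs infinitely often. A partial function `g`
that is undefined on an infinite set `Z` is extended by such a function on one of two infinite
halves of `Z`; the other half keeps the domain coinfinite.

Since `sInf ∅ = 0` for cardinals, the inequality of covering numbers does not follow from
monotonicity of the infimum alone: the Mycielski ideal covers `k^ω` because it contains all
singletons.
-/

open Cardinal

/-- `PF k`: partial functions from `ω` to `k` (encoded as functions
`ℕ → Option (Fin k)`) whose domain is coinfinite. -/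
def PF (k : ℕ) : Set (ℕ → Option (Fin k)) :=
  {g | {n | g n = none}.Infinite}

/-- `g ⊆* f` for partial functions: for all but finitely many `x` in the domain
of `g`, `x` is in the domain of `f` and `f x = g x`. -/
def SubStar {k : ℕ} (g f : ℕ → Option (Fin k)) : Prop :=
  {x | (g x).isSome ∧ f x ≠ g x}.Finite

/-- A total function `ℕ → Fin k` regarded as a partial function. -/
def toPartial {k : ℕ} (f : ℕ → Fin k) : ℕ → Option (Fin k) := fun n => some (f n)

/-- The Rosłanowski ideal `ℜₖ`: all `A ⊆ k^ω` such that for every `g ∈ PF k`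
there is `g' ∈ PF k` with `g ⊆* g'` and `g' ⊄* f` for every `f ∈ A`. -/
def Ros (k : ℕ) : Set (Set (ℕ → Fin k)) :=
  {A | ∀ g ∈ PF k, ∃ g' ∈ PF k, SubStar g g' ∧ ∀ f ∈ A, ¬ SubStar g' (toPartial f)}

open Function Set

theorem exists_infinite_inter_preimage_singleton {α ι : Type*} [Countable ι] [Nonempty ι]
    {s : Set α} (hs : s.Infinite) : ∃ p : α → ι, ∀ i, (s ∩ p ⁻¹' {i}).Infinite := by
  obtain ⟨c, hc⟩ := exists_injective_nat (ι × ℕ)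
  let e : ι × ℕ → α := fun q => hs.natEmbedding s (c q)
  have he : Injective e := Subtype.val_injective.comp ((hs.natEmbedding s).injective.comp hc)
  refine ⟨fun x => (invFun e x).1, fun i => ?_⟩
  have hrow : ∀ m, e (i, m) ∈ s ∩ (fun x => (invFun e x).1) ⁻¹' {i} := fun m =>
    ⟨(hs.natEmbedding s _).2, congrArg Prod.fst (leftInverse_invFun he (i, m))⟩
  exact infinite_of_injective_forall_mem (he.comp (Prod.mk_right_injective i)) hrow

theorem mem_mycielski_iff {k : ℕ} {A : Set (ℕ → Fin k)} :
    A ∈ Mycielski k ↔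
      ∀ X : Set ℕ, X.Infinite → ∃ h : ℕ → Fin k, ∀ f ∈ A, ∃ x ∈ X, f x ≠ h x := by
  refine forall₂_congr fun X hX => ⟨fun hne => ?_, ?_⟩
  · obtain ⟨u, hu⟩ := (ne_univ_iff_exists_notMem _).1 hne
    have : Nonempty (Fin k) := hX.nonempty.to_subtype.map u
    obtain ⟨h, rfl⟩ := Subtype.surjective_restrict (β := fun _ => Fin k) (· ∈ X) u
    refine ⟨h, fun f hf => ?_⟩
    by_contra! hfh
    exact hu ⟨f, hf, fun x => hfh x x.2⟩
  · rintro ⟨h, hh⟩ huniv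
    obtain ⟨f, hf, hfh⟩ : X.domRestrict h ∈ restrictSet A X := huniv ▸ mem_univ _
    obtain ⟨x, hx, hne⟩ := hh f hf
    exact hne (hfh ⟨x, hx⟩)

theorem singleton_mem_mycielski {k : ℕ} (hk : 2 ≤ k) (f : ℕ → Fin k) : {f} ∈ Mycielski k := by
  have : Nontrivial (Fin k) := Fin.nontrivial_iff_two_le.2 hk
  choose h hh using fun x => exists_ne (f x)
  refine mem_mycielski_iff.2 fun X hX => ⟨h, ?_⟩
  rintro _ rfl
  obtain ⟨x, hx⟩ := hX.nonempty
  exact ⟨x, hx, (hh x).symm⟩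

theorem sUnion_mycielski {k : ℕ} (hk : 2 ≤ k) : ⋃₀ Mycielski k = Set.univ :=
  eq_univ_of_forall fun f => ⟨{f}, singleton_mem_mycielski hk f, rfl⟩

theorem exists_forall_infinite_ne {k : ℕ} {A : Set (ℕ → Fin k)} (hA : A ∈ Mycielski k)
    {X : Set ℕ} (hX : X.Infinite) :
    ∃ h : ℕ → Fin k, ∀ f ∈ A, {x ∈ X | f x ≠ h x}.Infinite := by
  obtain ⟨p, hp⟩ := exists_infinite_inter_preimage_singleton (ι := ℕ) hX
  choose h hh using fun n => mem_mycielski_iff.1 hA _ (hp n)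
  refine ⟨fun x => h (p x) x, fun f hf => ?_⟩
  choose x hx hne using fun n => hh n f hf
  have hpx : LeftInverse p x := fun n => (hx n).2
  refine infinite_of_injective_forall_mem hpx.injective fun n => ⟨(hx n).1, ?_⟩
  simpa only [hpx n] using hne n

section Piecewise

variable {k : ℕ} {Y : Set ℕ} [DecidablePred (· ∈ Y)] {g : ℕ → Option (Fin k)}

theorem piecewise_mem_pf (u : ℕ → Option (Fin k)) (hY : ({n | g n = none} \ Y).Infinite) :
    Y.piecewise u g ∈ PF k :=
  hY.mono fun _ hn => (piecewise_eq_of_notMem Y u g hn.2).trans hn.1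

theorem subStar_piecewise (u : ℕ → Option (Fin k)) (hY : Y ⊆ {n | g n = none}) :
    SubStar g (Y.piecewise u g) := by
  refine finite_empty.subset ?_
  rintro n ⟨hgn, hne⟩
  have hnY : n ∉ Y := fun hnY => Option.isSome_iff_ne_none.1 hgn (hY hnY)
  exact hne (piecewise_eq_of_notMem Y u g hnY)

theorem not_subStar_piecewise {h f : ℕ → Fin k} (hY : {n ∈ Y | f n ≠ h n}.Infinite) :
    ¬ SubStar (Y.piecewise (toPartial h) g) (toPartial f) := by
  refine hY.mono ?_
  rintro n ⟨hnY, hne⟩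
  have hn : Y.piecewise (toPartial h) g n = some (h n) := piecewise_eq_of_mem Y _ g hnY
  exact ⟨hn ▸ rfl, fun hf => hne (Option.some_injective _ (hf.trans hn))⟩

end Piecewise

theorem mem_ros_of_mem_mycielski {k : ℕ} {A : Set (ℕ → Fin k)} (hA : A ∈ Mycielski k) :
    A ∈ Ros k := by
  classical
  intro g hg
  obtain ⟨p, hp⟩ := exists_infinite_inter_preimage_singleton (ι := Bool) hg
  let Y := {n | g n = none} ∩ p ⁻¹' {true}
  obtain ⟨h, hh⟩ := exists_forall_infinite_ne hA (hp true)
  have hcompl : ({n | g n = none} \ Y).Infinite :=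
    (hp false).mono fun _ hn => ⟨hn.1, fun hnY => Bool.false_ne_true (hn.2.symm.trans hnY.2)⟩
  exact ⟨Y.piecewise (toPartial h) g, piecewise_mem_pf _ hcompl,
    subStar_piecewise _ inter_subset_left, fun f hf => not_subStar_piecewise (hh f hf)⟩

theorem covNum_le_covNum_of_subset {α : Type} {I J : Set (Set α)} (hI : ⋃₀ I = Set.univ)
    (hIJ : I ⊆ J) : covNum J ≤ covNum I := by
  refine csInf_le_csInf' ⟨#I, I, Subset.rfl, hI, rfl⟩ ?_
  rintro _ ⟨S, hS, hcov, rfl⟩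
  exact ⟨S, hS.trans hIJ, hcov, rfl⟩

/-- For every `k ≥ 2`, the Mycielski ideal is contained in the Rosłanowski
ideal, and consequently `cov(ℜ_k) ≤ cov(𝔐_k)`. -/
theorem Mycielski_subset_Ros (k : ℕ) (hk : 2 ≤ k) :
    Mycielski k ⊆ Ros k ∧ covNum (Ros k) ≤ covNum (Mycielski k) := by
  have hsub : Mycielski k ⊆ Ros k := fun _ => mem_ros_of_mem_mycielski
  exact ⟨hsub, covNum_le_covNum_of_subset (sUnion_mycielski hk) hsub⟩
end

section
/- Suppose {A_ξ : ξ < ω₁} is a family of subsets of 2^ω whose union is all of 2^ω, for each ξ < ω₁ the function Φ_ξ witnesses that A_ξ ∈ ℜ_2, and {f_ξ : ξ < ω₁} ⊆ PF_2 is a ⊆*-increasing sequence (f_μ ⊆* f_ν whenever μ ≤ ν < ω₁) such that f_{ξ+1} = Φ_ξ(f_ξ) for every ξ < ω₁. Then the pair of sequences ({f_ξ⁻¹{0}}_{ξ<ω₁}, {f_ξ⁻¹{1}}_{ξ<ω₁}) is a gap: there is no set C ⊆ ω such that for every ξ < ω₁ both f_ξ⁻¹{0} ⊆ C modulo a finite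 set and f_ξ⁻¹{1} ∩ C is finite. -/
/-!
A total `F : ℕ → Fin 2` satisfies `g ⊆* F` iff `F⁻¹ {0}` almost contains `g⁻¹ {0}` and is almost
disjoint from `g⁻¹ {1}`, so a set `C` filling the gap amounts to a total function `F` with
`f ξ ⊆* F` for all `ξ < ω₁`. But `F` lies in some `A ξ`, which rules out
`f (ξ + 1) = Φ ξ (f ξ) ⊆* F`, and `ξ + 1 < ω₁` because `ω₁` is a limit ordinal.
-/

open Cardinal

theorem subStar_toPartial_iff {k : ℕ} {g : ℕ → Option (Fin k)} {F : ℕ → Fin k} :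
    SubStar g (toPartial F) ↔ ∀ v, ({x | g x = some v} \ F ⁻¹' {v}).Finite := by
  have disagreement_eq : {x | (g x).isSome ∧ toPartial F x ≠ g x} =
      ⋃ v, {x | g x = some v} \ F ⁻¹' {v} := by
    ext x
    cases hg : g x <;> simp [toPartial, hg]
  rw [SubStar, disagreement_eq]
  exact ⟨fun h v => h.subset (Set.subset_iUnion_of_subset v subset_rfl), Set.finite_iUnion⟩

theorem subStar_toPartial_fin_two_iff {g : ℕ → Option (Fin 2)} {F : ℕ → Fin 2} :
    SubStar g (toPartial F) ↔
      ({x | g x = some 0} \ F ⁻¹' {0}).Finite ∧ ({x | g x = some 1} ∩ F ⁻¹' {0}).Finite := by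
  have compl_preimage_one : (F ⁻¹' {1})ᶜ = F ⁻¹' {0} := by
    ext x
    change F x ≠ 1 ↔ F x = 0
    lia
  rw [subStar_toPartial_iff, Fin.forall_fin_two, Set.sdiff_eq {x | g x = some 1},
    compl_preimage_one]

theorem surjective_preimage_zero {α : Type*} :
    Function.Surjective fun F : α → Fin 2 => F ⁻¹' {0} := by
  classical
  intro C
  refine ⟨C.piecewise 0 1, ?_⟩
  ext x
  by_cases hx : x ∈ C <;> simp [hx]

theorem exists_separating_iff_exists_subStar {ι : Type*} {p : ι → Prop}
    {f : ι → ℕ → Option (Fin 2)} :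
    (∃ C : Set ℕ, ∀ i, p i →
        ({x | f i x = some 0} \ C).Finite ∧ ({x | f i x = some 1} ∩ C).Finite) ↔
      ∃ F : ℕ → Fin 2, ∀ i, p i → SubStar (f i) (toPartial F) := by
  simp only [surjective_preimage_zero.exists, subStar_toPartial_fin_two_iff]

theorem gap_of_tower_general {o : Ordinal} (ho : Order.IsSuccPrelimit o)
    {A : Ordinal → Set (ℕ → Fin 2)} (hcov : ∀ F : ℕ → Fin 2, ∃ ξ < o, F ∈ A ξ)
    {f : Ordinal → ℕ → Option (Fin 2)}
    (hfA : ∀ ξ < o, ∀ F ∈ A ξ, ¬ SubStar (f (ξ + 1)) (toPartial F)) :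
    ¬ ∃ C : Set ℕ, ∀ ξ < o,
        ({x | f ξ x = some 0} \ C).Finite ∧ ({x | f ξ x = some 1} ∩ C).Finite := by
  rw [exists_separating_iff_exists_subStar]
  rintro ⟨F, hfF⟩
  obtain ⟨ξ, hξ, hFA⟩ := hcov F
  exact hfA ξ hξ F hFA (hfF (ξ + 1) (ho.add_one_lt hξ))

/-- Suppose `{A ξ : ξ < ω₁}` covers `2^ω`, each `Φ ξ` witnesses that
`A ξ ∈ ℜ₂` (that is, for every `g ∈ PF 2`, `Φ ξ g ∈ PF 2`, `g ⊆ Φ ξ g`, and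
`Φ ξ g ⊄* f` for every `f ∈ A ξ`), and `{f ξ : ξ < ω₁} ⊆ PF 2` is a
`⊆*`-increasing sequence with `f (ξ+1) = Φ ξ (f ξ)` for every `ξ < ω₁`.
Then the pair `({(f ξ)⁻¹ {0}}, {(f ξ)⁻¹ {1}})` is a gap: no set `C ⊆ ω`
almost contains every `(f ξ)⁻¹ {0}` while meeting every `(f ξ)⁻¹ {1}` only
finitely. -/
theorem gap_of_tower
    (A : Ordinal → Set (ℕ → Fin 2))
    (hcov : ∀ F : ℕ → Fin 2, ∃ ξ < (aleph 1).ord, F ∈ A ξ)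
    (Φ : Ordinal → (ℕ → Option (Fin 2)) → (ℕ → Option (Fin 2)))
    (hΦ : ∀ ξ < (aleph 1).ord, ∀ g ∈ PF 2,
      Φ ξ g ∈ PF 2 ∧ (∀ n v, g n = some v → Φ ξ g n = some v) ∧
        ∀ f ∈ A ξ, ¬ SubStar (Φ ξ g) (toPartial f))
    (f : Ordinal → (ℕ → Option (Fin 2)))
    (hf : ∀ ξ < (aleph 1).ord, f ξ ∈ PF 2)
    (hmono : ∀ μ ν : Ordinal, μ ≤ ν → ν < (aleph 1).ord → SubStar (f μ) (f ν))
    (hsucc : ∀ ξ < (aleph 1).ord, f (ξ + 1) = Φ ξ (f ξ)) :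
    ¬ ∃ C : Set ℕ, ∀ ξ < (aleph 1).ord,
        ({x | f ξ x = some 0} \ C).Finite ∧ ({x | f ξ x = some 1} ∩ C).Finite :=
  gap_of_tower_general (isSuccLimit_ord (aleph0_le_aleph 1)).isSuccPrelimit hcov
    fun ξ hξ => hsucc ξ hξ ▸ (hΦ ξ hξ (f ξ) (hf ξ hξ)).2.2
end

section
/- Let J ≥ 1 be an integer and let T be a J-branching tree of finite sequences of natural numbers (prefix-closed, every node has at most J immediate successors in T). Then for every i ∈ ω there is a function f : {i, i+1, …, i+J^i−1} → {0,…,J} such that for every infinite branch b of T (every b ∈ ω^ω all of whose finite initial segments lie in T), f differs from the restriction of b to {i, …, i+J^i−1}; that is, f ≠ b↾(i+J^i ∖ i). -/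
/-!
Level `i` of a `J`-branching tree has at most `J ^ i` nodes. Any `N` nodes can be blocked by one
word `w` of length `N` over an alphabet with more than `J` letters, in the sense that no node
followed by `w` stays in the tree: by induction, if `w` blocks `N` nodes and `t` is one more, then
`t ++ w` has at most `J` successors, so some letter `a` is not among them, and `w ++ [a]` blocks all
`N + 1` nodes. Reading off from position `i` on a word that blocks level `i` gives the function.
-/

open Descriptive

lemma encard_biUnion_le_encard_mul {ι β : Type*} {s : Set ι} {f : ι → Set β} {n : ℕ∞}
    (hf : ∀ i ∈ s, (f i).encard ≤ n) : (⋃ i ∈ s, f i).encard ≤ s.encard * n := by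
  obtain hs | hs := s.finite_or_infinite
  · lift s to Finset ι using hs
    calc (⋃ i ∈ s, f i).encard
        ≤ ∑ i ∈ s, (f i).encard := s.set_encard_biUnion_le f
      _ ≤ s.card • n := Finset.sum_le_card_nsmul s _ n hf
      _ = (s : Set ι).encard * n := by rw [nsmul_eq_mul, Set.encard_coe_eq_coe_finsetCard]
  · obtain rfl | hn := eq_or_ne n 0
    · have hempty : ⋃ i ∈ s, f i = ∅ := by simpa using hf
      simp [hempty]
    · simp [hs.encard_eq, ENat.top_mul hn]

lemma natCast_lt_encard_Iic (n : ℕ) : (n : ℕ∞) < (Set.Iic n).encard := by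
  rw [← Finset.coe_Iic, Set.encard_coe_eq_coe_finsetCard, Nat.card_Iic]
  exact_mod_cast n.lt_succ_self

section

variable {α : Type*} {T : tree α} {J : ℕ∞} {A : Set α}

/-- The tree `T` is `J`-branching: every node of `T` has at most `J` immediate successors in `T`. -/
def IsBranching (T : tree α) (J : ℕ∞) : Prop :=
  ∀ t ∈ T, {a : α | t ++ [a] ∈ T}.encard ≤ J

/-- The infinite branches of `T`, which the paper calls the closure of `T`: the sequences whose
finite initial segments all lie in `T`. -/
def infiniteBranches (T : tree α) : Set (ℕ → α) :=
  {b | ∀ m : ℕ, (List.ofFn fun j : Fin m => b j) ∈ T}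

/-- The nodes of `T` of length `i`. -/
def treeLevel (T : tree α) (i : ℕ) : Set (List α) :=
  {t | t ∈ T ∧ t.length = i}

lemma treeLevel_succ_subset (T : tree α) (i : ℕ) :
    treeLevel T (i + 1) ⊆ ⋃ t ∈ treeLevel T i, (fun a => t ++ [a]) '' {a | t ++ [a] ∈ T} := by
  rintro s ⟨hs, hlen⟩
  obtain rfl | ⟨t, a, rfl⟩ := List.eq_nil_or_concat' s
  · simp at hlen
  · have ht : t ∈ treeLevel T i := ⟨Tree.mem_of_append hs, by simpa using hlen⟩
    exact Set.mem_biUnion ht ⟨a, hs, rfl⟩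

lemma IsBranching.encard_treeLevel_le (hT : IsBranching T J) (i : ℕ) :
    (treeLevel T i).encard ≤ J ^ i := by
  induction i with
  | zero =>
    have hsub : treeLevel T 0 ⊆ {[]} := fun t ht => List.length_eq_zero_iff.mp ht.2
    simpa using Set.encard_le_encard hsub
  | succ i ih =>
    calc (treeLevel T (i + 1)).encard
        ≤ (⋃ t ∈ treeLevel T i, (fun a => t ++ [a]) '' {a | t ++ [a] ∈ T}).encard :=
          Set.encard_le_encard (treeLevel_succ_subset T i)
      _ ≤ (treeLevel T i).encard * J := encard_biUnion_le_encard_mul fun t ht =>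
          (Set.encard_image_le _ _).trans (hT t ht.1)
      _ ≤ J ^ i * J := by gcongr
      _ = J ^ (i + 1) := (pow_succ J i).symm

lemma IsBranching.exists_append_singleton_notMem (hT : IsBranching T J) (hA : J < A.encard)
    (t : List α) : ∃ a ∈ A, t ++ [a] ∉ T := by
  by_contra! hall
  obtain ⟨a, ha⟩ : A.Nonempty := Set.encard_pos.mp (pos_of_gt hA)
  have ht : t ∈ T := Tree.mem_of_append (hall a ha)
  exact hA.not_ge ((Set.encard_le_encard hall).trans (hT t ht))

lemma exists_word_forall_append_notMem (hA : ∀ t : List α, ∃ a ∈ A, t ++ [a] ∉ T)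
    {S : Set (List α)} (hS : S.Finite) :
    ∃ w : List α, w.length = S.ncard ∧ (∀ a ∈ w, a ∈ A) ∧ ∀ t ∈ S, t ++ w ∉ T := by
  induction S, hS using Set.Finite.induction_on with
  | empty => exact ⟨[], by simp⟩
  | @insert t S ht hS ih =>
    obtain ⟨w, hlen, hwA, hw⟩ := ih
    obtain ⟨a, ha, hta⟩ := hA (t ++ w)
    refine ⟨w ++ [a], by simp [hlen, Set.ncard_insert_of_notMem ht hS],
      by simpa [or_imp, forall_and, ha] using hwA, fun s hs => ?_⟩
    rw [← List.append_assoc]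
    obtain rfl | hs := Set.mem_insert_iff.mp hs
    · exact hta
    · exact fun hmem => hw s hs (Tree.mem_of_append hmem)

lemma append_mem_of_mem_infiniteBranches {b : ℕ → α} (hb : b ∈ infiniteBranches T) {i : ℕ}
    {w : List α} (hw : ∀ (k : ℕ) (hk : k < w.length), w[k] = b (i + k)) :
    (List.ofFn fun j : Fin i => b j) ++ w ∈ T := by
  have hofFn : (List.ofFn fun j : Fin w.length => b (i + j)) = w :=
    List.ext_getElem (by simp) fun k _ hk => by simp [hw k hk]
  simpa [List.ofFn_add, hofFn] using hb (i + w.length)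

theorem branching_tree_avoid_general {J : ℕ} (hT : IsBranching T J) (hA : J < A.encard)
    (i : ℕ) :
    ∃ f : ℕ → α, (∀ x, f x ∈ A) ∧
      ∀ b ∈ infiniteBranches T, ∃ x ∈ Set.Ico i (i + J ^ i), f x ≠ b x := by
  have hle : (treeLevel T i).encard ≤ (J ^ i : ℕ) := by
    exact_mod_cast hT.encard_treeLevel_le i
  obtain ⟨hfin, hcard⟩ := Set.encard_le_coe_iff_finite_ncard_le.mp hle
  obtain ⟨w, hlen, hwA, hw⟩ :=
    exists_word_forall_append_notMem (hT.exists_append_singleton_notMem hA) hfin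
  obtain ⟨a, ha⟩ : A.Nonempty := Set.encard_pos.mp (pos_of_gt hA)
  refine ⟨fun x => if h : x - i < w.length then w[x - i] else a, fun x => ?_, fun b hb => ?_⟩
  · dsimp only
    split_ifs with h
    exacts [hwA _ (List.getElem_mem h), ha]
  · by_contra! hfb
    have hlevel : (List.ofFn fun j : Fin i => b j) ∈ treeLevel T i := ⟨hb i, List.length_ofFn⟩
    refine hw _ hlevel (append_mem_of_mem_infiniteBranches hb fun k hk => ?_)
    have hmem : i + k ∈ Set.Ico i (i + J ^ i) := ⟨by omega, by omega⟩
    simpa [hk] using hfb (i + k) hmem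

end

/-- Let `J ≥ 1` and let `T` be a `J`-branching tree of finite sequences of
natural numbers (prefix-closed, every node has at most `J` immediate
successors).  Then for every `i` there is a function `f` on the interval
`{i, …, i + J^i - 1}` with values in `{0, …, J}` such that for every infinite
branch `b` of `T`, `f` differs from `b` somewhere on that interval. -/
theorem branching_tree_avoid (J : ℕ) (hJ : 1 ≤ J) (T : Set (List ℕ))
    (hpref : ∀ s ∈ T, ∀ t : List ℕ, t <+: s → t ∈ T)
    (hbr : ∀ t ∈ T, {m : ℕ | t ++ [m] ∈ T}.encard ≤ (J : ℕ∞)) :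
    ∀ i : ℕ, ∃ f : ℕ → ℕ,
      (∀ x, i ≤ x → x < i + J ^ i → f x ≤ J) ∧
      ∀ b : ℕ → ℕ, (∀ m : ℕ, (List.ofFn fun j : Fin m => b ↑j) ∈ T) →
        ∃ x, i ≤ x ∧ x < i + J ^ i ∧ f x ≠ b x := by
  intro i
  obtain ⟨f, hfJ, hf⟩ := branching_tree_avoid_general
    (T := ⟨T, fun s a hs => hpref _ hs s (List.prefix_append s [a])⟩) hbr
    (natCast_lt_encard_Iic J) i
  exact ⟨f, fun x _ _ => hfJ x, fun b hb => by simpa [and_assoc] using hf b hb⟩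
end

section
/- Let k ≥ 2 and let {h_n : n ∈ ω} ⊆ PF_k be a ⊆*-increasing sequence (h_m ⊆* h_n whenever m ≤ n). Let Q = {f ∈ PF_k : f ⊆* h_n for some n ∈ ω}, partially ordered by reverse inclusion (f' is an extension of f if f ⊆ f'). Then Q is σ-centred: Q can be written as a countable union of subsets C_m such that any finitely many members of a single C_m have a common extension in Q. -/
section FiniteModifications

open Filter

theorem countable_setOf_eventuallyEq_cofinite {α β : Type*} [Countable α] [Countable β]
    (g : α → β) : {q | q =ᶠ[cofinite] g}.Countable := by
  classical
  let modify (c : Σ s : Finset α, s → β) (x : α) : β :=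
    if hx : x ∈ c.1 then c.2 ⟨x, hx⟩ else g x
  refine (Set.countable_range modify).mono fun q hq => ?_
  have hfin : {x | q x ≠ g x}.Finite := eventually_cofinite.1 hq
  refine ⟨⟨hfin.toFinset, fun x => q x⟩, funext fun x => ?_⟩
  by_cases hx : q x = g x <;> simp [modify, hx]

variable {k : ℕ} {f g q : ℕ → Option (Fin k)}

theorem mem_PF_iff_frequently : g ∈ PF k ↔ ∃ᶠ x in cofinite, g x = none :=
  frequently_cofinite_iff_infinite.symm

theorem mem_PF_of_eventuallyEq (hqg : q =ᶠ[cofinite] g) (hg : g ∈ PF k) : q ∈ PF k := by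
  rw [mem_PF_iff_frequently] at hg ⊢
  exact (hg.and_eventually hqg).mono fun x hx => hx.2.trans hx.1

theorem subStar_iff_eventually :
    SubStar f g ↔ ∀ᶠ x in cofinite, (f x).isSome → g x = f x := by
  simp only [SubStar, eventually_cofinite, Classical.not_imp, ne_eq]

theorem subStar_of_eventuallyEq (hqg : q =ᶠ[cofinite] g) : SubStar q g :=
  subStar_iff_eventually.2 <| hqg.mono fun _ hx _ => hx.symm

theorem SubStar.or_eventuallyEq (hfg : SubStar f g) :
    (fun x => (f x).or (g x)) =ᶠ[cofinite] g := by
  filter_upwards [subStar_iff_eventually.1 hfg] with x hx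
  cases hfx : f x with
  | none => exact Option.none_or
  | some v => simpa [hfx] using (hx (by simp [hfx])).symm

theorem SubStar.exists_eventuallyEq_extension (hfg : SubStar f g) :
    ∃ q, q =ᶠ[cofinite] g ∧ ∀ x v, f x = some v → q x = some v :=
  ⟨fun x => (f x).or (g x), hfg.or_eventuallyEq, fun x v hx => by simp [hx]⟩

theorem tower_forcing_sigmaCentred_general {ι : Type*} [Countable ι] [Nonempty ι]
    (h : ι → ℕ → Option (Fin k)) (hPF : ∀ i, h i ∈ PF k) :
    ∃ C : ℕ → Set (ℕ → Option (Fin k)),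
      (∀ m, C m ⊆ {f | f ∈ PF k ∧ ∃ i, SubStar f (h i)}) ∧
      ({f | f ∈ PF k ∧ ∃ i, SubStar f (h i)} ⊆ ⋃ m, C m) ∧
      ∀ m, ∃ q ∈ {f | f ∈ PF k ∧ ∃ i, SubStar f (h i)},
        ∀ p ∈ C m, ∀ x : ℕ, ∀ v : Fin k, p x = some v → q x = some v := by
  set Q := {f | f ∈ PF k ∧ ∃ i, SubStar f (h i)}
  let D := ⋃ i, {q | q =ᶠ[cofinite] h i}
  have hD_countable : D.Countable :=
    Set.countable_iUnion fun i => countable_setOf_eventuallyEq_cofinite (h i)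
  have hD_nonempty : D.Nonempty :=
    ‹Nonempty ι›.elim fun i => ⟨h i, Set.mem_iUnion.2 ⟨i, EventuallyEq.refl cofinite (h i)⟩⟩
  have hDQ : D ⊆ Q := Set.iUnion_subset fun i q hq =>
    ⟨mem_PF_of_eventuallyEq hq (hPF i), i, subStar_of_eventuallyEq hq⟩
  obtain ⟨d, hd⟩ := hD_countable.exists_eq_range hD_nonempty
  refine ⟨fun m => {f ∈ Q | ∀ x v, f x = some v → d m x = some v},
    fun m => Set.sep_subset _ _, ?_, fun m => ⟨d m, hDQ (hd ▸ Set.mem_range_self m), ?_⟩⟩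
  · rintro f ⟨hf, i, hfi⟩
    obtain ⟨q, hq, hfq⟩ := hfi.exists_eventuallyEq_extension
    obtain ⟨m, rfl⟩ : q ∈ Set.range d := hd ▸ Set.mem_iUnion.2 ⟨i, hq⟩
    exact Set.mem_iUnion.2 ⟨m, ⟨hf, i, hfi⟩, hfq⟩
  · exact fun p hp => hp.2

end FiniteModifications

/-- Let `{h n : n ∈ ω} ⊆ PF k` be `⊆*`-increasing and let
`Q = {f ∈ PF k : f ⊆* h n for some n}`, ordered by extension (inclusion of
partial functions).  Then `Q` is σ-centred: it is a countable union of sets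
`C m` such that any finitely many members of a single `C m` have a common
extension in `Q`. -/
theorem tower_forcing_sigmaCentred (k : ℕ) (hk : 2 ≤ k)
    (h : ℕ → (ℕ → Option (Fin k)))
    (hPF : ∀ n, h n ∈ PF k)
    (hmono : ∀ m n : ℕ, m ≤ n → SubStar (h m) (h n)) :
    ∃ C : ℕ → Set (ℕ → Option (Fin k)),
      (∀ m, C m ⊆ {f | f ∈ PF k ∧ ∃ n, SubStar f (h n)}) ∧
      ({f | f ∈ PF k ∧ ∃ n, SubStar f (h n)} ⊆ ⋃ m, C m) ∧
      ∀ m, ∀ s : Finset (ℕ → Option (Fin k)), ↑s ⊆ C m →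
        ∃ q ∈ {f | f ∈ PF k ∧ ∃ n, SubStar f (h n)},
          ∀ p ∈ s, ∀ x : ℕ, ∀ v : Fin k, p x = some v → q x = some v := by
  obtain ⟨C, hCQ, hQC, hC⟩ := tower_forcing_sigmaCentred_general h hPF
  exact ⟨C, hCQ, hQC, fun m s hs => (hC m).imp fun q hq => ⟨hq.1, fun p hp => hq.2 p (hs hp)⟩⟩
end
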